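/- Let {Π_x^a : a = 1,…,m}, x = 1,…,N, be POVMs on ℂ^n and let ρ be a density matrix on ℂ^n with decreasingly ordered eigenvalue vector λ := eig↓(ρ). Then the vector P := (Tr(Π_x^a ρ))_{(x,a)} ∈ ℝ^{Nm} satisfies: for every k = 1,…,Nm, the sum of the k largest entries of P is at most s_k(λ) := max over subsets T ⊆ {1,…,N}×{1,…,m} with |T| = k of Σ_{i=1}^n λ_i · eig↓(Σ_{(x,a)∈T} Π_x^a)_i; moreover Σ_{(x,a)} Tr(Π_x^a ρ) = N = s_{Nm}(λ). -/

import Mathlib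

/-!
The sum of the `k` largest entries of `P` is `Tr(M_T ρ)`, where `T` is the set of positions of
those entries and `M_T = ∑_{(x,a) ∈ T} Π_x^a`. By von Neumann's trace inequality this is at most
`∑ i, λ_i eig↓(M_T)_i`, one of the numbers whose maximum is `s_k(λ)`. For `k = Nm` the only choice
of `T` is the full index set, for which `M_T = N • 1`, so both totals are `N` times the unit trace
of `ρ`.

Von Neumann's inequality comes from diagonalizing `A` and `B`: if `W` is the unitary matrix relating
the two eigenbases, then `Tr(AB) = ∑ i j, a_i |W_ij|² b_j`. The matrix `|W_ij|²` is doubly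
stochastic, hence by Birkhoff's theorem a convex combination of permutation matrices, and for each
permutation the rearrangement inequality applies.
-/

open scoped ComplexOrder

noncomputable section

/-- A density matrix: positive semidefinite with unit trace. -/
def IsDensityMatrix {n : Type*} [Fintype n] [DecidableEq n] (ρ : Matrix n n ℂ) : Prop :=
  ρ.PosSemidef ∧ ρ.trace = 1

/-- The decreasing rearrangement of a real vector. -/
def dSort {n : ℕ} (v : Fin n → ℝ) : Fin n → ℝ := fun i => v (Tuple.sort v i.rev)

/-- The sum of the `k` largest entries of a real vector. -/
def topSum {n : ℕ} (v : Fin n → ℝ) (k : ℕ) : ℝ :=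
  ∑ i ∈ Finset.univ.filter (fun i : Fin n => (i : ℕ) < k), dSort v i

/-- `eig↓(M)`: eigenvalues of a Hermitian matrix listed in decreasing order
(junk value `0` if `M` is not Hermitian). -/
def eigDesc {n : ℕ} (M : Matrix (Fin n) (Fin n) ℂ) : Fin n → ℝ :=
  if h : M.IsHermitian then dSort h.eigenvalues else 0

open Matrix

section DoublyStochastic

variable {n : Type*} [Fintype n] [DecidableEq n]

lemma dotProduct_mulVec_le_of_mem_doublyStochastic {R : Type*} [Field R] [LinearOrder R]
    [IsStrictOrderedRing R] {f g : n → R} (hfg : Monovary f g) {M : Matrix n n R}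
    (hM : M ∈ doublyStochastic R n) : f ⬝ᵥ M *ᵥ g ≤ f ⬝ᵥ g := by
  obtain ⟨w, hw_nonneg, hw_sum, rfl⟩ := exists_eq_sum_perm_of_mem_doublyStochastic hM
  calc f ⬝ᵥ (∑ σ, w σ • σ.permMatrix R) *ᵥ g
      = ∑ σ, w σ * (f ⬝ᵥ (g ∘ σ)) := by
        simp only [sum_mulVec, smul_mulVec, permMatrix_mulVec, dotProduct_sum, dotProduct_smul,
          smul_eq_mul]
    _ ≤ ∑ σ, w σ * (f ⬝ᵥ g) := Finset.sum_le_sum fun σ _ =>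
        mul_le_mul_of_nonneg_left hfg.sum_mul_comp_perm_le_sum_mul (hw_nonneg σ)
    _ = f ⬝ᵥ g := by rw [← Finset.sum_mul, hw_sum, one_mul]

variable {𝕜 : Type*} [RCLike 𝕜] {W : Matrix n n 𝕜}

lemma sum_norm_sq_row_of_mem_unitaryGroup (hW : W ∈ unitaryGroup n 𝕜) (i : n) :
    ∑ j, ‖W i j‖ ^ 2 = 1 := by
  have h : (W * star W) i i = 1 := by rw [mem_unitaryGroup_iff.mp hW, one_apply_eq]
  simp only [mul_apply, star_apply, RCLike.star_def, RCLike.mul_conj] at h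
  exact_mod_cast h

lemma map_norm_sq_mem_doublyStochastic (hW : W ∈ unitaryGroup n 𝕜) :
    W.map (‖·‖ ^ 2) ∈ doublyStochastic ℝ n := by
  refine mem_doublyStochastic_iff_sum.mpr
    ⟨fun _ _ => sq_nonneg _, sum_norm_sq_row_of_mem_unitaryGroup hW, fun j => ?_⟩
  simpa only [star_apply, norm_star, map_apply] using
    sum_norm_sq_row_of_mem_unitaryGroup (Unitary.star_mem hW) j

end DoublyStochastic

section VonNeumann

variable {𝕜 : Type*} [RCLike 𝕜] {m n : Type*} [Fintype m] [DecidableEq m] [Fintype n]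
  [DecidableEq n]

lemma trace_diagonal_mul_mul_diagonal_mul_conjTranspose (a : m → ℝ) (b : n → ℝ)
    (W : Matrix m n 𝕜) :
    trace (diagonal (RCLike.ofReal ∘ a : m → 𝕜) * W * diagonal (RCLike.ofReal ∘ b : n → 𝕜) * Wᴴ) =
      ((a ⬝ᵥ W.map (‖·‖ ^ 2) *ᵥ b : ℝ) : 𝕜) := by
  simp only [trace, diag_apply, dotProduct, mulVec, map_apply, mul_apply (N := Wᴴ), mul_diagonal,
    diagonal_mul, conjTranspose_apply, RCLike.star_def, Function.comp_apply, Finset.mul_sum,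
    RCLike.ofReal_sum, RCLike.ofReal_mul, RCLike.ofReal_pow, ← RCLike.mul_conj]
  exact Finset.sum_congr rfl fun i _ => Finset.sum_congr rfl fun j _ => by ring

variable {A B : Matrix n n 𝕜} (hA : A.IsHermitian) (hB : B.IsHermitian)

lemma trace_mul_eq_dotProduct_eigenvalues :
    trace (A * B) = ((hA.eigenvalues ⬝ᵥ
      (star hA.eigenvectorUnitary * hB.eigenvectorUnitary : Matrix n n 𝕜).map (‖·‖ ^ 2) *ᵥ
        hB.eigenvalues : ℝ) : 𝕜) := by
  rw [← trace_diagonal_mul_mul_diagonal_mul_conjTranspose]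
  conv_lhs => rw [hA.spectral_theorem, hB.spectral_theorem]
  simp only [Unitary.conjStarAlgAut_apply, mul_assoc]
  rw [trace_mul_comm]
  simp only [← star_eq_conjTranspose, star_mul, Unitary.coe_star, star_star, mul_assoc]

lemma monovary_eigenvalues : Monovary hA.eigenvalues hB.eigenvalues :=
  (hA.eigenvalues₀_antitone.monovary hB.eigenvalues₀_antitone).comp_right _

/-- **Von Neumann's trace inequality** for Hermitian matrices. Mathlib's `eigenvalues` lists the two
spectra in the same order, so no sorting appears in the statement. -/
theorem re_trace_mul_le_dotProduct_eigenvalues :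
    RCLike.re (trace (A * B)) ≤ hA.eigenvalues ⬝ᵥ hB.eigenvalues := by
  rw [trace_mul_eq_dotProduct_eigenvalues hA hB, RCLike.ofReal_re]
  exact dotProduct_mulVec_le_of_mem_doublyStochastic (monovary_eigenvalues hA hB)
    (map_norm_sq_mem_doublyStochastic (star hA.eigenvectorUnitary * hB.eigenvectorUnitary).2)

end VonNeumann

section DecreasingRearrangement

variable {d : ℕ}

lemma exists_perm_dSort_eq_comp (v : Fin d → ℝ) : ∃ σ : Equiv.Perm (Fin d), dSort v = v ∘ σ :=
  ⟨Fin.revPerm.trans (Tuple.sort v), rfl⟩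

lemma antitone_dSort (v : Fin d → ℝ) : Antitone (dSort v) :=
  (Tuple.monotone_sort v).comp_antitone Fin.rev_anti

lemma sum_dSort (v : Fin d → ℝ) : ∑ i, dSort v i = ∑ i, v i := by
  obtain ⟨σ, hσ⟩ := exists_perm_dSort_eq_comp v
  rw [hσ]
  exact Equiv.sum_comp σ v

lemma dotProduct_le_dotProduct_dSort (f g : Fin d → ℝ) : f ⬝ᵥ g ≤ dSort f ⬝ᵥ dSort g := by
  obtain ⟨σ, hσ⟩ := exists_perm_dSort_eq_comp f
  obtain ⟨τ, hτ⟩ := exists_perm_dSort_eq_comp g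
  have hmono : Monovary (dSort f) (dSort g) := (antitone_dSort f).monovary (antitone_dSort g)
  calc f ⬝ᵥ g = ∑ i, f (σ i) * g (σ i) := (Equiv.sum_comp σ fun i => f i * g i).symm
    _ = ∑ i, dSort f i * dSort g ((σ.trans τ.symm) i) := by simp [hσ, hτ]
    _ ≤ dSort f ⬝ᵥ dSort g := hmono.sum_mul_comp_perm_le_sum_mul

lemma exists_topSum_comp_eq_sum {ι : Type*} (e : Fin d ↪ ι) (f : ι → ℝ) {k : ℕ} (hk : k ≤ d) :
    ∃ T : Finset ι, T.card = k ∧ topSum (f ∘ e) k = ∑ q ∈ T, f q := by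
  obtain ⟨σ, hσ⟩ := exists_perm_dSort_eq_comp (f ∘ e)
  refine ⟨({i : Fin d | (i : ℕ) < k} : Finset (Fin d)).map (σ.toEmbedding.trans e), ?_, ?_⟩
  · rw [Finset.card_map, Fin.card_filter_val_lt, min_eq_right hk]
  · simp [topSum, hσ]

end DecreasingRearrangement

section EigDesc

variable {n : ℕ} {A B : Matrix (Fin n) (Fin n) ℂ}

lemma eigDesc_eq_dSort_eigenvalues (hA : A.IsHermitian) : eigDesc A = dSort hA.eigenvalues :=
  dif_pos hA

lemma sum_eigDesc (hA : A.IsHermitian) : ∑ i, eigDesc A i = A.trace.re := by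
  rw [eigDesc_eq_dSort_eigenvalues hA, sum_dSort, hA.trace_eq_sum_eigenvalues, Complex.re_sum]
  rfl

lemma re_trace_mul_le_dotProduct_eigDesc (hA : A.IsHermitian) (hB : B.IsHermitian) :
    (trace (A * B)).re ≤ eigDesc A ⬝ᵥ eigDesc B := by
  rw [eigDesc_eq_dSort_eigenvalues hA, eigDesc_eq_dSort_eigenvalues hB]
  exact (re_trace_mul_le_dotProduct_eigenvalues hA hB).trans (dotProduct_le_dotProduct_dSort _ _)

lemma eigDesc_smul_one (c : ℝ) :
    eigDesc (c • (1 : Matrix (Fin n) (Fin n) ℂ)) = Function.const (Fin n) c := by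
  have hH : (c • (1 : Matrix (Fin n) (Fin n) ℂ)).IsHermitian :=
    isHermitian_one.smul (IsSelfAdjoint.all c)
  ext i
  have : Nonempty (Fin n) := ⟨i⟩
  have hspec : spectrum ℝ (c • (1 : Matrix (Fin n) (Fin n) ℂ)) = {c} := by
    rw [← Algebra.algebraMap_eq_smul_one, spectrum.scalar_eq]
  rw [eigDesc_eq_dSort_eigenvalues hH]
  exact hspec.subset (hH.eigenvalues_mem_spectrum_real _)

end EigDesc

section FamilySums

variable {n ι : Type*} [Fintype n] {Q : ι → Matrix n n ℂ} {ρ : Matrix n n ℂ}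

lemma sum_re_trace_mul (T : Finset ι) :
    ∑ q ∈ T, (trace (Q q * ρ)).re = (trace ((∑ q ∈ T, Q q) * ρ)).re := by
  rw [Finset.sum_mul, trace_sum, Complex.re_sum]

lemma sum_re_trace_mul_of_sum_eq_smul_one [Fintype ι] [DecidableEq n] {c : ℝ}
    (hQ_sum : ∑ q, Q q = c • 1) : ∑ q, (trace (Q q * ρ)).re = c * ρ.trace.re := by
  simp [sum_re_trace_mul, hQ_sum]

lemma sum_prod_eq_card_smul {X Y R M : Type*} [Fintype X] [Fintype Y] [Semiring R]
    [AddCommMonoid M] [Module R M] {f : X → Y → M} {v : M} (hf : ∀ x, ∑ y, f x y = v) :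
    ∑ q : X × Y, f q.1 q.2 = (Fintype.card X : R) • v := by
  simp [Fintype.sum_prod_type, hf, Nat.cast_smul_eq_nsmul]

end FamilySums

section SpectralBound

variable {n : ℕ} {ι : Type*}

/-- The bound `s_k(λ)` for a family `Q` of matrices: the largest value of `∑ i, λ_i eig↓(Q_T)_i`
over the index sets `T` of size `k`, where `Q_T = ∑ q ∈ T, Q q`. It is meaningful when `ι` is finite
and `k ≤ Fintype.card ι`; for larger `k` it is the junk value `sSup ∅ = 0`. -/
def spectralBound (lam : Fin n → ℝ) (Q : ι → Matrix (Fin n) (Fin n) ℂ) (k : ℕ) : ℝ :=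
  sSup {r : ℝ | ∃ T : Finset ι, T.card = k ∧ r = ∑ i, lam i * eigDesc (∑ q ∈ T, Q q) i}

lemma dotProduct_eigDesc_le_spectralBound [Finite ι] (lam : Fin n → ℝ)
    (Q : ι → Matrix (Fin n) (Fin n) ℂ) (T : Finset ι) :
    lam ⬝ᵥ eigDesc (∑ q ∈ T, Q q) ≤ spectralBound lam Q T.card := by
  refine le_csSup (Set.Finite.bddAbove ?_) ⟨T, rfl, rfl⟩
  refine (Set.finite_range fun T : Finset ι => lam ⬝ᵥ eigDesc (∑ q ∈ T, Q q)).subset ?_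
  rintro r ⟨T, -, rfl⟩
  exact ⟨T, rfl⟩

lemma spectralBound_card [Fintype ι] (lam : Fin n → ℝ) (Q : ι → Matrix (Fin n) (Fin n) ℂ) :
    spectralBound lam Q (Fintype.card ι) = lam ⬝ᵥ eigDesc (∑ q, Q q) := by
  simp only [spectralBound, Finset.card_eq_iff_eq_univ, exists_eq_left, Set.ofPred_eq_eq_singleton,
    csSup_singleton, dotProduct]

variable {d : ℕ} {Q : ι → Matrix (Fin n) (Fin n) ℂ} {ρ : Matrix (Fin n) (Fin n) ℂ}

lemma topSum_re_trace_mul_le_spectralBound [Finite ι] (hQ : ∀ q, (Q q).IsHermitian)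
    (hρ : ρ.IsHermitian) (e : Fin d ↪ ι) {k : ℕ} (hk : k ≤ d) :
    topSum (fun i => (trace (Q (e i) * ρ)).re) k ≤ spectralBound (eigDesc ρ) Q k := by
  obtain ⟨T, rfl, hT⟩ := exists_topSum_comp_eq_sum e (fun q => (trace (Q q * ρ)).re) hk
  calc topSum (fun i => (trace (Q (e i) * ρ)).re) T.card
      = (trace (ρ * ∑ q ∈ T, Q q)).re := by
        rw [trace_mul_comm, ← sum_re_trace_mul]
        exact hT
    _ ≤ eigDesc ρ ⬝ᵥ eigDesc (∑ q ∈ T, Q q) :=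
        re_trace_mul_le_dotProduct_eigDesc hρ (isSelfAdjoint_sum T fun q _ => hQ q)
    _ ≤ spectralBound (eigDesc ρ) Q T.card := dotProduct_eigDesc_le_spectralBound _ _ T

lemma spectralBound_card_of_sum_eq_smul_one [Fintype ι] {c : ℝ} (hQ_sum : ∑ q, Q q = c • 1)
    (hρ : ρ.IsHermitian) :
    spectralBound (eigDesc ρ) Q (Fintype.card ι) = c * ρ.trace.re := by
  rw [spectralBound_card, hQ_sum, eigDesc_smul_one, ← sum_eigDesc hρ, Finset.mul_sum]
  exact Finset.sum_congr rfl fun i _ => mul_comm _ _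

end SpectralBound

theorem povm_prob_vector_submajorized_state_dependent_general {n d : ℕ} {ι : Type*} [Fintype ι]
    (e : Fin d ≃ ι) {Q : ι → Matrix (Fin n) (Fin n) ℂ} (hQ : ∀ q, (Q q).IsHermitian) {c : ℝ}
    (hQ_sum : ∑ q, Q q = c • 1) {ρ : Matrix (Fin n) (Fin n) ℂ} (hρ : ρ.IsHermitian) :
    (∀ k ≤ d, topSum (fun i => (trace (Q (e i) * ρ)).re) k ≤ spectralBound (eigDesc ρ) Q k) ∧
    ∑ i, (trace (Q (e i) * ρ)).re = c * ρ.trace.re ∧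
    spectralBound (eigDesc ρ) Q d = c * ρ.trace.re := by
  refine ⟨fun k => topSum_re_trace_mul_le_spectralBound hQ hρ e.toEmbedding, ?_, ?_⟩
  · rw [e.sum_comp fun q => (trace (Q q * ρ)).re, sum_re_trace_mul_of_sum_eq_smul_one hQ_sum]
  · rw [← Fintype.card_fin d, Fintype.card_congr e, spectralBound_card_of_sum_eq_smul_one hQ_sum hρ]

/-- **State-dependent direct-sum majorization bound for POVM outcome probabilities.**
The probability vector `P = (Tr(Π_x^a ρ))_{(x,a)}` has its `k` largest entries summing to at
most `s_k(λ)`, where `λ = eig↓(ρ)`; moreover the total sum is `N = s_{Nm}(λ)`. -/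
theorem povm_prob_vector_submajorized_state_dependent
    (n N m : ℕ) (hn : 1 ≤ n) (hN : 1 ≤ N) (hm : 1 ≤ m)
    (Pv : Fin N → Fin m → Matrix (Fin n) (Fin n) ℂ)
    (hPvpos : ∀ x a, (Pv x a).PosSemidef)
    (hPvsum : ∀ x, ∑ a, Pv x a = (1 : Matrix (Fin n) (Fin n) ℂ))
    (ρ : Matrix (Fin n) (Fin n) ℂ) (hρ : IsDensityMatrix ρ)
    (lam : Fin n → ℝ) (hlam : lam = eigDesc ρ)
    (P : Fin (N * m) → ℝ)
    (hP : P = fun i =>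
      (Matrix.trace (Pv (finProdFinEquiv.symm i).1 (finProdFinEquiv.symm i).2 * ρ)).re)
    (s : ℕ → ℝ)
    (hs : ∀ k, s k = sSup { r : ℝ | ∃ T : Finset (Fin N × Fin m), T.card = k ∧
      r = ∑ i, lam i * eigDesc (∑ q ∈ T, Pv q.1 q.2) i }) :
    (∀ k, 1 ≤ k → k ≤ N * m → topSum P k ≤ s k) ∧
    (∑ i, P i = N) ∧ s (N * m) = N := by
  obtain rfl : s = spectralBound lam fun q : Fin N × Fin m => Pv q.1 q.2 := funext hs
  subst hlam hP
  obtain ⟨h_top, h_sum, h_card⟩ := povm_prob_vector_submajorized_state_dependent_general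
    finProdFinEquiv.symm (fun q => (hPvpos q.1 q.2).isHermitian) (sum_prod_eq_card_smul hPvsum)
    hρ.1.isHermitian
  exact ⟨fun k _ => h_top k, by simpa [hρ.2] using h_sum, by simpa [hρ.2] using h_card⟩
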